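/- Let G be a primitive but not 2-homogeneous permutation group on an infinite set X. Then G acts locally rigidly on X. -/

import Mathlib

open Filter

/-- Two points are twins in `V` if no third point of `V` distinguishes them. -/
def TwinIn {X : Type*} (R : X → X → Prop) (V : Finset X) (x y : X) : Prop :=
  ∀ z ∈ V, z ≠ x → z ≠ y → (R z x ↔ R z y)

section Twins

variable {X : Type*} {R : X → X → Prop} {V : Finset X}

lemma TwinIn.refl (x : X) : TwinIn R V x x := fun _ _ _ _ => Iff.rfl

lemma TwinIn.symm {x y : X} (h : TwinIn R V x y) : TwinIn R V y x :=
  fun z hz hy hx => (h z hz hx hy).symm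

lemma TwinIn.trans (hsymm : ∀ x y, R x y → R y x) {x y z : X} (hx : x ∈ V) (hy : y ∈ V)
    (hz : z ∈ V) (hxy : TwinIn R V x y) (hyz : TwinIn R V y z) : TwinIn R V x z := by
  have hcomm : ∀ a b, R a b ↔ R b a := fun a b => ⟨hsymm a b, hsymm b a⟩
  intro w hw hwx hwz
  by_cases hwy : w = y
  · subst hwy
    by_cases hxz : x = z
    · rw [hxz]
    · have h₁ := hyz x hx (Ne.symm hwx) hxz
      have h₂ := hxy z hz (Ne.symm hxz) (Ne.symm hwz)
      rw [hcomm w x, h₁, hcomm x z, h₂, hcomm]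
  · exact (hxy w hw hwx hwy).trans (hyz w hw hwy hwz)

lemma twinIn_map_iff [DecidableEq X] {g : Equiv.Perm X} (hg : ∀ x y, R (g x) (g y) ↔ R x y)
    (hV : V.image g = V) {x y : X} : TwinIn R V (g x) (g y) ↔ TwinIn R V x y := by
  have hmem : ∀ z, g z ∈ V ↔ z ∈ V := fun z => by
    conv_lhs => rw [← hV]
    simp
  constructor
  · intro h z hz hx hy
    have := h (g z) ((hmem z).2 hz) (by simpa using hx) (by simpa using hy)
    rwa [hg, hg] at this
  · intro h z hz hx hy
    obtain ⟨w, rfl⟩ := g.surjective z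
    rw [hg, hg]
    exact h w ((hmem w).1 hz) (fun e => hx (by rw [e])) (fun e => hy (by rw [e]))

/-- If blocks of twins are stacked on top of each other, each larger than everything below it,
then every automorphism maps each block element to a twin of itself. -/
lemma twinIn_apply_of_tower [DecidableEq X] (hsymm : ∀ x y, R x y → R y x)
    {W : ℕ → Finset X} {k : ℕ} (hmono : Monotone W)
    (hcard : ∀ i, 2 * (W i).card < (W (i + 1)).card)
    (htwin : ∀ i < k, ∀ s ∈ W (i + 1) \ W i, ∀ t ∈ W (i + 1) \ W i, TwinIn R (W k) s t)
    {g : Equiv.Perm X} (hg : ∀ x y, R (g x) (g y) ↔ R x y) (hV : (W k).image g = W k) :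
    ∀ t ∈ W k \ W 0, TwinIn R (W k) (g t) t := by
  have hmem : ∀ z, g z ∈ W k ↔ z ∈ W k := fun z => by
    conv_lhs => rw [← hV]
    simp
  suffices h : ∀ m i, i + m = k → ∀ t ∈ W k \ W i, TwinIn R (W k) (g t) t from
    h k 0 (zero_add k)
  intro m
  induction m with
  | zero =>
    rintro i rfl t ht
    simp at ht
  | succ m ih =>
    intro i hi t ht
    have hik : i < k := by omega
    have ih' := ih (i + 1) (by omega)
    rw [Finset.mem_sdiff] at ht
    by_cases hti : t ∈ W (i + 1)
    swap
    · exact ih' t (Finset.mem_sdiff.2 ⟨ht.1, hti⟩)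
    have hsub : W (i + 1) ⊆ W k := hmono hik
    -- stability passes to twins
    have hpass : ∀ x ∈ W k, ∀ y ∈ W k, TwinIn R (W k) x y → TwinIn R (W k) (g x) x →
        TwinIn R (W k) (g y) y := by
      intro x hx y hy hxy hgx
      have h₁ : TwinIn R (W k) (g y) (g x) := (twinIn_map_iff hg hV).2 hxy.symm
      have h₂ := TwinIn.trans hsymm ((hmem y).2 hy) ((hmem x).2 hx) hx h₁ hgx
      exact TwinIn.trans hsymm ((hmem y).2 hy) hx hy h₂ hxy
    by_contra hnot
    have hB : ∀ s ∈ W (i + 1) \ W i, ¬ TwinIn R (W k) (g s) s := by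
      intro s hs hgs
      exact hnot (hpass s (hsub (Finset.mem_sdiff.1 hs).1) t ht.1
        (htwin i hik s hs t (Finset.mem_sdiff.2 ⟨hti, ht.2⟩)) hgs)
    have himg : (W (i + 1) \ W i).image g ⊆ W i := by
      intro y hy
      obtain ⟨s, hs, rfl⟩ := Finset.mem_image.1 hy
      have hsk := hsub (Finset.mem_sdiff.1 hs).1
      have hgsk := (hmem s).2 hsk
      by_contra hgi
      by_cases hgi1 : g s ∈ W (i + 1)
      · exact hB s hs (htwin i hik _ (Finset.mem_sdiff.2 ⟨hgi1, hgi⟩) _ hs)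
      · exact hB s hs ((twinIn_map_iff hg hV).1 (ih' _ (Finset.mem_sdiff.2 ⟨hgsk, hgi1⟩)))
    have h₁ := Finset.card_le_card himg
    rw [Finset.card_image_of_injective _ g.injective,
      Finset.card_sdiff_of_subset (hmono (Nat.le_succ i))] at h₁
    have := hcard i
    simp only [Nat.succ_eq_add_one] at h₁
    omega

/-- A tower of twin blocks which separates the points of `U` from all other points of the bottom
level forces its automorphisms to fix `U` pointwise. -/
lemma apply_eq_of_tower [DecidableEq X] (hsymm : ∀ x y, R x y → R y x)
    {W : ℕ → Finset X} {k : ℕ} (hmono : Monotone W)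
    (hcard : ∀ i, 2 * (W i).card < (W (i + 1)).card)
    (htwin : ∀ i < k, ∀ s ∈ W (i + 1) \ W i, ∀ t ∈ W (i + 1) \ W i, TwinIn R (W k) s t)
    {U : Finset X} (hU : U ⊆ W 0)
    (hout : ∀ u ∈ U, ∀ b ∈ W k \ W 0, ¬ TwinIn R (W k) u b)
    (hin : ∀ u ∈ U, ∀ w ∈ W 0, w ≠ u → (∃ b ∈ W k \ W 0, TwinIn R (W k) w b) ∨
      ∃ b ∈ W k \ W 0, ¬ (R b u ↔ R b w))
    {g : Equiv.Perm X} (hg : ∀ x y, R (g x) (g y) ↔ R x y) (hV : (W k).image g = W k) :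
    ∀ u ∈ U, g u = u := by
  have hmem : ∀ z, g z ∈ W k ↔ z ∈ W k := fun z => by
    conv_lhs => rw [← hV]
    simp
  have hstab := twinIn_apply_of_tower hsymm hmono hcard htwin hg hV
  intro u hu
  have huk : u ∈ W k := hmono (Nat.zero_le k) (hU hu)
  have hguk := (hmem u).2 huk
  have hnot : ∀ b ∈ W k \ W 0, ¬ TwinIn R (W k) (g u) b := by
    intro b hb h
    have hbk := (Finset.mem_sdiff.1 hb).1
    exact hout u hu b hb ((twinIn_map_iff hg hV).1
      (TwinIn.trans hsymm hguk hbk ((hmem b).2 hbk) h (hstab b hb).symm))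
  have hgu0 : g u ∈ W 0 := by
    by_contra h
    exact hnot (g u) (Finset.mem_sdiff.2 ⟨hguk, h⟩) (TwinIn.refl _)
  by_contra hne
  rcases hin u hu (g u) hgu0 hne with ⟨b, hb, h⟩ | ⟨b, hb, h⟩
  · exact hnot b hb h
  · have hbu : g u ≠ b := fun e => hnot b hb (e ▸ TwinIn.refl _)
    have hgbu : g u ≠ g b := fun e => hnot b hb (e ▸ hstab b hb)
    have h₁ := hstab b hb (g u) hguk hgbu hbu
    have hcomm : ∀ a b, R a b ↔ R b a := fun a b => ⟨hsymm a b, hsymm b a⟩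
    rw [hg, hcomm u b, hcomm (g u) b] at h₁
    exact h h₁

end Twins

lemma exists_mem_succ_sdiff {X : Type*} [DecidableEq X] {W : ℕ → Finset X} (hmono : Monotone W)
    {z : X} {i k : ℕ} (hi : z ∉ W i) (hk : z ∈ W k) :
    ∃ j, i ≤ j ∧ j < k ∧ z ∈ W (j + 1) \ W j := by
  induction k with
  | zero => exact absurd (hmono (Nat.zero_le i) hk) hi
  | succ k ih =>
    by_cases hz : z ∈ W k
    · obtain ⟨j, hij, hjk, hj⟩ := ih hz
      exact ⟨j, hij, by omega, hj⟩
    · refine ⟨k, ?_, by omega, Finset.mem_sdiff.2 ⟨hk, hz⟩⟩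
      by_contra h
      exact hi (hmono (show k + 1 ≤ i by omega) hk)

section Blocks

variable {X : Type*} {R : X → X → Prop}

lemma Ultrafilter.eventually_iff_eventually (p : Ultrafilter X) (P : X → Prop) :
    ∀ᶠ t in (p : Filter X), (P t ↔ ∀ᶠ s in (p : Filter X), P s) := by
  by_cases h : ∀ᶠ s in (p : Filter X), P s
  · simp only [h, iff_true]
  · simpa only [h, iff_false] using Ultrafilter.eventually_not.2 h

/-- Arbitrarily many points realise any prescribed finite part of the limit type of `p i`. -/
lemma exists_block [DecidableEq X] (hsymm : ∀ x y, R x y → R y x) (p : ℕ → Ultrafilter X)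
    (hp : ∀ i, (p i : Filter X) ≤ cofinite) (k i n : ℕ) (W : Finset X) :
    ∃ B : Finset X, B.card = n ∧ Disjoint W B ∧ ∀ t ∈ B,
      (∀ z ∈ W, R t z ↔ ∀ᶠ a in (p i : Filter X), R a z) ∧
      (∀ j ∈ insert i (Finset.range k), (∀ᶠ a in (p j : Filter X), R a t) ↔
        ∀ᶠ b in (p i : Filter X), ∀ᶠ a in (p j : Filter X), R a b) ∧
      ∀ s ∈ B, s ≠ t → (R s t ↔ ∀ᶠ b in (p i : Filter X), ∀ᶠ a in (p i : Filter X), R a b) := by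
  induction n with
  | zero => exact ⟨∅, by simp⟩
  | succ n ih =>
    obtain ⟨B, hBn, hWB, hB⟩ := ih
    have h₁ : ∀ᶠ t in (p i : Filter X), t ∉ W ∪ B :=
      hp i ((W ∪ B).finite_toSet.compl_mem_cofinite)
    have h₂ : ∀ᶠ t in (p i : Filter X), ∀ z ∈ W ∪ B, (R t z ↔ ∀ᶠ a in (p i : Filter X), R a z) :=
      (Finset.eventually_all _).2 fun z _ => (p i).eventually_iff_eventually fun t => R t z
    have h₃ : ∀ᶠ t in (p i : Filter X), ∀ j ∈ insert i (Finset.range k),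
        ((∀ᶠ a in (p j : Filter X), R a t) ↔
          ∀ᶠ b in (p i : Filter X), ∀ᶠ a in (p j : Filter X), R a b) :=
      (Finset.eventually_all _).2 fun j _ => (p i).eventually_iff_eventually _
    obtain ⟨t, ht₁, ht₂, ht₃⟩ := (h₁.and (h₂.and h₃)).exists
    rw [Finset.notMem_union] at ht₁
    have hnew : ∀ s ∈ B, (R t s ↔ ∀ᶠ b in (p i : Filter X), ∀ᶠ a in (p i : Filter X), R a b) :=
      fun s hs => (ht₂ s (Finset.mem_union_right _ hs)).trans
        ((hB s hs).2.1 i (Finset.mem_insert_self _ _))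
    refine ⟨insert t B, by rw [Finset.card_insert_of_notMem ht₁.2, hBn], ?_, ?_⟩
    · rw [Finset.disjoint_insert_right]
      exact ⟨ht₁.1, hWB⟩
    · intro x hx
      rcases Finset.mem_insert.1 hx with rfl | hx
      · refine ⟨fun z hz => ht₂ z (Finset.mem_union_left _ hz), ht₃, fun s hs hsx => ?_⟩
        have hs := (Finset.mem_insert.1 hs).resolve_left hsx
        rw [← hnew s hs]
        exact ⟨hsymm _ _, hsymm _ _⟩
      · refine ⟨(hB x hx).1, (hB x hx).2.1, fun s hs hsx => ?_⟩
        rcases Finset.mem_insert.1 hs with hst | hs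
        · rw [hst]
          exact hnew x hx
        · exact (hB x hx).2.2 s hs hsx

/-- Stacking blocks of points which approximate the ultrafilters `p 0, p 1, …` on top of `W₀`. -/
lemma exists_tower [DecidableEq X] (hsymm : ∀ x y, R x y → R y x) (p : ℕ → Ultrafilter X)
    (hp : ∀ i, (p i : Filter X) ≤ cofinite) (k : ℕ) (W₀ : Finset X) :
    ∃ W : ℕ → Finset X, W 0 = W₀ ∧ Monotone W ∧
      (∀ i, 2 * (W i).card + 2 = (W (i + 1)).card) ∧
      (∀ i < k, ∀ s ∈ W (i + 1) \ W i, ∀ t ∈ W (i + 1) \ W i, TwinIn R (W k) s t) ∧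
      (∀ i, ∀ t ∈ W (i + 1) \ W i,
        ∀ z ∈ W i, R t z ↔ ∀ᶠ a in (p i : Filter X), R a z) ∧
      (∀ i, ∀ t ∈ W (i + 1) \ W i, ∀ s ∈ W (i + 1) \ W i, s ≠ t →
        (R s t ↔ ∀ᶠ b in (p i : Filter X), ∀ᶠ a in (p i : Filter X), R a b)) := by
  choose B hBcard hBdisj hB using fun i (W : Finset X) =>
    exists_block hsymm p hp k i (W.card + 2) W
  obtain ⟨W, hW₀, hsucc⟩ : ∃ W : ℕ → Finset X, W 0 = W₀ ∧ ∀ i, W (i + 1) = W i ∪ B i (W i) :=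
    ⟨fun n => Nat.rec W₀ (fun i W => W ∪ B i W) n, rfl, fun _ => rfl⟩
  have hdiff : ∀ i, W (i + 1) \ W i = B i (W i) := fun i => by
    rw [hsucc, Finset.union_sdiff_cancel_left (hBdisj i (W i))]
  have hmono : Monotone W := monotone_nat_of_le_succ fun i => by
    rw [hsucc]
    exact Finset.subset_union_left
  refine ⟨W, hW₀, hmono, fun i => ?_, ?_, ?_, ?_⟩
  · rw [hsucc, Finset.card_union_of_disjoint (hBdisj i (W i)), hBcard]
    ring
  · intro i hi s hs t ht z hz hzs hzt
    rw [hdiff] at hs ht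
    by_cases hzi : z ∈ W i
    · have h₁ := ((hB i (W i) s hs).1 z hzi).trans ((hB i (W i) t ht).1 z hzi).symm
      exact ⟨fun h => hsymm _ _ (h₁.1 (hsymm _ _ h)), fun h => hsymm _ _ (h₁.2 (hsymm _ _ h))⟩
    · obtain ⟨j, hij, hjk, hzj⟩ : ∃ j, i ≤ j ∧ j < k ∧ z ∈ W (j + 1) \ W j :=
        exists_mem_succ_sdiff hmono hzi hz
      rw [hdiff] at hzj
      rcases hij.eq_or_lt with rfl | hij
      · exact ((hB i (W i) s hs).2.2 z hzj hzs).trans ((hB i (W i) t ht).2.2 z hzj hzt).symm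
      · have hup : ∀ x ∈ B i (W i), x ∈ W j := fun x hx => by
          apply hmono (show i + 1 ≤ j from hij)
          rw [hsucc]
          exact Finset.mem_union_right _ hx
        have hjr : j ∈ insert i (Finset.range k) := by simp [hjk]
        rw [(hB j (W j) z hzj).1 s (hup s hs), (hB j (W j) z hzj).1 t (hup t ht),
          (hB i (W i) s hs).2.1 j hjr, (hB i (W i) t ht).2.1 j hjr]
  · intro i t ht
    rw [hdiff] at ht
    exact (hB i (W i) t ht).1
  · intro i t ht
    rw [hdiff] at ht ⊢
    exact (hB i (W i) t ht).2.2

end Blocks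

section Graph

variable {X : Type*} {R : X → X → Prop}

lemma exists_enumeration {ι : Type*} [Nonempty ι] (s : Finset ι) :
    ∃ (k : ℕ) (v : ℕ → ι), (∀ i < k, v i ∈ s) ∧ ∀ a ∈ s, ∃ i < k, v i = a := by
  refine ⟨s.toList.length, fun i => s.toList.getD i (Classical.arbitrary ι), ?_, ?_⟩
  · intro i hi
    beta_reduce
    rw [List.getD_eq_getElem _ _ hi]
    exact Finset.mem_toList.1 (List.getElem_mem hi)
  · intro a ha
    obtain ⟨i, hi, rfl⟩ := List.mem_iff_getElem.1 (Finset.mem_toList.2 ha)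
    exact ⟨i, hi, List.getD_eq_getElem _ _ hi⟩

/-- If all points are separated by the rows of `R`, every finite set lies in a finite set whose
points are separated by its own members. -/
lemma exists_superset_separated [DecidableEq X]
    (hsep : ∀ x y, (∀ z, R z x ↔ R z y) → x = y) (hsymm : ∀ x y, R x y → R y x) (F : Finset X) :
    ∃ F' : Finset X, F ⊆ F' ∧ ∀ x ∈ F', ∀ y ∈ F', (∀ z ∈ F', R z x ↔ R z y) → x = y := by
  classical
  let T : Finset X → Finset (X × X) := fun F =>
    F.offDiag.filter fun q => ∀ z ∈ F, R z q.1 ↔ R z q.2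
  have hcomm : ∀ a b, R a b ↔ R b a := fun a b => ⟨hsymm a b, hsymm b a⟩
  induction hn : (T F).card using Nat.strong_induction_on generalizing F with
  | _ n ih =>
    by_cases h : ∀ x ∈ F, ∀ y ∈ F, (∀ z ∈ F, R z x ↔ R z y) → x = y
    · exact ⟨F, subset_rfl, h⟩
    push Not at h
    obtain ⟨x, hx, y, hy, hxy, hne⟩ := h
    obtain ⟨z, hz⟩ : ∃ z, ¬ (R z x ↔ R z y) := by
      by_contra hc
      push Not at hc
      exact hne (hsep x y hc)
    have hnew : ∀ v ∈ F, ¬ ∀ w ∈ insert z F, R w z ↔ R w v := by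
      intro v hv h
      apply hz
      rw [hcomm z x, hcomm z y, h x (Finset.mem_insert_of_mem hx),
        h y (Finset.mem_insert_of_mem hy), hcomm x v, hcomm y v, hxy v hv]
    have hlt : (T (insert z F)).card < n := by
      rw [← hn]
      apply Finset.card_lt_card
      refine (Finset.ssubset_iff_of_subset ?_).2 ⟨(x, y), ?_, ?_⟩
      · rintro ⟨a, b⟩ hab
        simp only [T, Finset.mem_filter, Finset.mem_offDiag] at hab ⊢
        obtain ⟨⟨ha, hb, hab⟩, h⟩ := hab
        rcases Finset.mem_insert.1 ha with ha₁ | ha₁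
        · subst ha₁
          exact absurd h (hnew b ((Finset.mem_insert.1 hb).resolve_left (Ne.symm hab)))
        rcases Finset.mem_insert.1 hb with hb₁ | hb₁
        · subst hb₁
          exact absurd (fun w hw => (h w hw).symm) (hnew a ha₁)
        exact ⟨⟨ha₁, hb₁, hab⟩, fun w hw => h w (Finset.mem_insert_of_mem hw)⟩
      · simp only [T, Finset.mem_filter, Finset.mem_offDiag]
        exact ⟨⟨hx, hy, hne⟩, hxy⟩
      · simp only [T, Finset.mem_filter, Finset.mem_offDiag]
        exact fun h => hz (h.2 z (Finset.mem_insert_self _ _))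
    obtain ⟨F', hF', h'⟩ := ih _ hlt (insert z F) rfl
    exact ⟨F', (Finset.subset_insert _ _).trans hF', h'⟩

/-- Local rigidity when every point is the limit of a nonprincipal ultrafilter. -/
lemma exists_rigid_of_limits [DecidableEq X] (hsymm : ∀ x y, R x y → R y x)
    (hdiag : ∀ x y, R x x → R y y) (hsep : ∀ x y, (∀ z, R z x ↔ R z y) → x = y)
    (P : X → Ultrafilter X) (hP : ∀ v, (P v : Filter X) ≤ cofinite)
    (hlim : ∀ v z, (∀ᶠ a in (P v : Filter X), R a z) ↔ R v z) (U : Finset X) :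
    ∃ V : Finset X, U ⊆ V ∧ ∀ g : Equiv.Perm X, (∀ x y, R (g x) (g y) ↔ R x y) →
      V.image g = V → ∀ u ∈ U, g u = u := by
  rcases isEmpty_or_nonempty X with hX | hX
  · exact ⟨U, subset_rfl, fun g _ _ u => hX.elim u⟩
  have hcomm : ∀ a b, R a b ↔ R b a := fun a b => ⟨hsymm a b, hsymm b a⟩
  have hfresh : ∀ q : X × X, ∃ z, z ∉ U ∧ (q ∈ U.offDiag → ¬ (R z q.1 ↔ R z q.2)) := by
    rintro ⟨x, y⟩
    by_cases hq : (x, y) ∈ U.offDiag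
    · obtain ⟨hx, hy, hne⟩ := Finset.mem_offDiag.1 hq
      obtain ⟨z, hz⟩ : ∃ z, ¬ (R z x ↔ R z y) := by
        by_contra hc
        push Not at hc
        exact hne (hsep x y hc)
      have h₁ : ∀ᶠ t in (P z : Filter X), t ∉ U := hP z U.finite_toSet.compl_mem_cofinite
      have hx' := (P z).eventually_iff_eventually fun t => R t x
      have hy' := (P z).eventually_iff_eventually fun t => R t y
      simp only [hlim] at hx' hy'
      obtain ⟨t, ht, htx, hty⟩ := (h₁.and (hx'.and hy')).exists
      exact ⟨t, ht, fun _ => by simpa only [htx, hty] using hz⟩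
    · have h₁ : ∀ᶠ t in (P x : Filter X), t ∉ U := hP x U.finite_toSet.compl_mem_cofinite
      obtain ⟨t, ht⟩ := h₁.exists
      exact ⟨t, ht, fun h => absurd h hq⟩
  choose sep hsepU hsepR using hfresh
  obtain ⟨F, hF, hFsep⟩ := exists_superset_separated hsep hsymm (U ∪ U.offDiag.image sep)
  have hUF : U ⊆ F := Finset.subset_union_left.trans hF
  obtain ⟨k, v, hv, hvsurj⟩ := exists_enumeration (F \ U)
  obtain ⟨W, hW₀, hmono, hcard, htwin, hlow, hsame⟩ :=
    exists_tower hsymm (fun i => P (v i)) (fun i => hP _) k F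
  have hFk : F ⊆ W k := hW₀ ▸ hmono (Nat.zero_le k)
  have hFW : ∀ i, F ⊆ W i := fun i => hW₀ ▸ hmono (Nat.zero_le i)
  have hvF : ∀ i < k, v i ∈ F := fun i hi => (Finset.mem_sdiff.1 (hv i hi)).1
  have hblock : ∀ i < k, ∀ b ∈ W (i + 1) \ W i, ∀ z ∈ W i, (R z b ↔ R z (v i)) := by
    intro i hi b hb z hz
    rw [hcomm z b, hlow i b hb z hz, hlim, hcomm]
  have hcopy : ∀ i < k, ∀ b ∈ W (i + 1) \ W i, ∀ z ∈ W k, z ≠ b → (R z b ↔ R z (v i)) := by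
    intro i hi b hb z hz hzb
    by_cases hzi : z ∈ W i
    · exact hblock i hi b hb z hzi
    obtain ⟨j, hij, hjk, hzj⟩ := exists_mem_succ_sdiff hmono hzi hz
    rcases hij.eq_or_lt with rfl | hij
    · rw [hsame i b hb z hzj hzb, hlow i z hzj _ (hFW i (hvF i hi))]
      simp only [hlim]
      rw [← hlim (v i) (v i)]
      simp only [hcomm (v i)]
    · have hbj : b ∈ W j := hmono (show i + 1 ≤ j from hij) (Finset.mem_sdiff.1 hb).1
      rw [hlow j z hzj b hbj, hlow j z hzj _ (hFW j (hvF i hi)), hlim, hlim]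
      exact hblock i hi b hb (v j) (hFW i (hvF j hjk))
  have hsdiff : ∀ i < k, ∀ b ∈ W (i + 1) \ W i, b ∈ W k \ W 0 := by
    intro i hi b hb
    rw [Finset.mem_sdiff] at hb ⊢
    exact ⟨hmono (show i + 1 ≤ k from hi) hb.1, fun h => hb.2 (hmono (Nat.zero_le i) h)⟩
  have hone : ∀ i, 1 < (W (i + 1) \ W i).card := by
    intro i
    rw [Finset.card_sdiff_of_subset (hmono (Nat.le_succ i))]
    have := hcard i
    simp only [Nat.succ_eq_add_one]
    omega
  have hne : ∀ i, (W (i + 1) \ W i).Nonempty := fun i =>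
    Finset.card_pos.1 (zero_lt_one.trans (hone i))
  refine ⟨W k, hUF.trans hFk, fun g hg hV => apply_eq_of_tower hsymm hmono
    (fun i => by have := hcard i; omega) htwin (hW₀ ▸ hUF) ?_ ?_ hg hV⟩
  · intro u hu b hb htw
    obtain ⟨hbk, hb₀⟩ := Finset.mem_sdiff.1 hb
    obtain ⟨i, -, hi, hbi⟩ := exists_mem_succ_sdiff hmono hb₀ hbk
    have huv : u ≠ v i := fun e => (Finset.mem_sdiff.1 (hv i hi)).2 (e ▸ hu)
    obtain ⟨z, hzF, hz⟩ : ∃ z ∈ F, ¬ (R z u ↔ R z (v i)) := by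
      by_contra hc
      push Not at hc
      exact huv (hFsep u (hUF hu) (v i) (hvF i hi) hc)
    by_cases hzu : z = u
    · subst hzu
      obtain ⟨b', hb', hbb⟩ := Finset.exists_mem_ne (hone i) b
      have hb'k := hsdiff i hi b' hb'
      have hb'z : b' ≠ z := fun e =>
        (Finset.mem_sdiff.1 hb'k).2 (hW₀ ▸ e ▸ hzF)
      have h := htw b' (Finset.mem_sdiff.1 hb'k).1 hb'z hbb
      rw [hcopy i hi b hbi b' (Finset.mem_sdiff.1 hb'k).1 hbb, hcomm b' z,
        hblock i hi b' hb' z (hFW i hzF), hcomm b' (v i),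
        hblock i hi b' hb' (v i) (hFW i (hvF i hi))] at h
      exact hz ⟨fun h' => h.2 (hdiag _ _ h'), fun h' => hdiag _ _ (h.1 h')⟩
    · have hzb : z ≠ b := fun e => hb₀ (hW₀ ▸ e ▸ hzF)
      exact hz ((htw z (hFk hzF) hzu hzb).trans (hcopy i hi b hbi z (hFk hzF) hzb))
  · intro u hu w hw hwu
    rw [hW₀] at hw
    by_cases hwU : w ∈ U
    · right
      have hq : (u, w) ∈ U.offDiag := Finset.mem_offDiag.2 ⟨hu, hwU, Ne.symm hwu⟩
      obtain ⟨i, hi, hvi⟩ := hvsurj (sep (u, w)) (Finset.mem_sdiff.2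
        ⟨hF (Finset.mem_union_right _ (Finset.mem_image_of_mem _ hq)), hsepU _⟩)
      obtain ⟨b, hb⟩ := hne i
      refine ⟨b, hsdiff i hi b hb, ?_⟩
      have := hsepR _ hq
      rwa [hcomm b u, hcomm b w, hblock i hi b hb u (hFW i (hUF hu)),
        hblock i hi b hb w (hFW i hw), hvi, hcomm u, hcomm w]
    · left
      obtain ⟨i, hi, rfl⟩ := hvsurj w (Finset.mem_sdiff.2 ⟨hw, hwU⟩)
      obtain ⟨b, hb⟩ := hne i
      exact ⟨b, hsdiff i hi b hb, fun z hz _ hzb => (hcopy i hi b hb z hz hzb).symm⟩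

/-- Local rigidity when every point is determined by its adjacencies to a finite set. -/
lemma exists_rigid_of_isolated [DecidableEq X] [Infinite X] (hsymm : ∀ x y, R x y → R y x)
    (hinf : ∀ x y, x ≠ y → {z | ¬ (R z x ↔ R z y)}.Infinite)
    (hiso : ∀ v, ∃ F : Finset X, ∀ x ∉ F, x ≠ v → ∃ z ∈ F, z ≠ v ∧ ¬ (R z v ↔ R z x))
    (U : Finset X) :
    ∃ V : Finset X, U ⊆ V ∧ ∀ g : Equiv.Perm X, (∀ x y, R (g x) (g y) ↔ R x y) →
      V.image g = V → ∀ u ∈ U, g u = u := by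
  have hcomm : ∀ a b, R a b ↔ R b a := fun a b => ⟨hsymm a b, hsymm b a⟩
  choose D hD using hiso
  have hex : ∀ q : X × X, ∃ p : Ultrafilter X, (p : Filter X) ≤ cofinite ∧
      (q.1 ≠ q.2 → ¬ ((∀ᶠ a in (p : Filter X), R a q.1) ↔ ∀ᶠ a in (p : Filter X), R a q.2)) := by
    rintro ⟨x, y⟩
    by_cases hne : x = y
    · exact ⟨hyperfilter X, hyperfilter_le_cofinite, fun h => absurd hne h⟩
    · have := cofinite_inf_principal_neBot_iff.2 (hinf x y hne)
      obtain ⟨p, hp⟩ := Ultrafilter.exists_le (cofinite ⊓ 𝓟 {z | ¬ (R z x ↔ R z y)})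
      refine ⟨p, hp.trans inf_le_left, fun _ h => ?_⟩
      have h₁ : ∀ᶠ t in (p : Filter X), ¬ (R t x ↔ R t y) :=
        (hp.trans inf_le_right) (mem_principal_self _)
      obtain ⟨t, ht, htx, hty⟩ := (h₁.and ((p.eventually_iff_eventually fun t => R t x).and
        (p.eventually_iff_eventually fun t => R t y))).exists
      exact ht (htx.trans (h.trans hty.symm))
  choose P hP hPsep using hex
  obtain ⟨F, hUF, hDF⟩ : ∃ F : Finset X, U ⊆ F ∧ ∀ u ∈ U, D u ⊆ F :=
    ⟨U ∪ U.biUnion D, Finset.subset_union_left, fun u hu =>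
      (Finset.subset_biUnion_of_mem D hu).trans Finset.subset_union_right⟩
  obtain ⟨k, v, -, hvsurj⟩ := exists_enumeration F.offDiag
  obtain ⟨W, hW₀, hmono, hcard, htwin, hlow, -⟩ :=
    exists_tower hsymm (fun i => P (v i)) (fun i => hP _) k F
  have hFW : ∀ i, F ⊆ W i := fun i => hW₀ ▸ hmono (Nat.zero_le i)
  refine ⟨W k, hUF.trans (hFW k), fun g hg hV => apply_eq_of_tower hsymm hmono
    (fun i => by have := hcard i; omega) htwin (hW₀ ▸ hUF) ?_ ?_ hg hV⟩
  · intro u hu b hb htw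
    obtain ⟨hbk, hb₀⟩ := Finset.mem_sdiff.1 hb
    rw [hW₀] at hb₀
    obtain ⟨z, hz, hzu, hzb⟩ := hD u b (fun h => hb₀ (hDF u hu h)) fun e => hb₀ (e ▸ hUF hu)
    exact hzb (htw z (hFW k (hDF u hu hz)) hzu fun e => hb₀ (e ▸ hDF u hu hz))
  · intro u hu w hw hwu
    rw [hW₀] at hw
    right
    obtain ⟨i, hi, hvi⟩ := hvsurj (u, w) (Finset.mem_offDiag.2 ⟨hUF hu, hw, Ne.symm hwu⟩)
    obtain ⟨b, hb⟩ : (W (i + 1) \ W i).Nonempty := by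
      rw [← Finset.card_pos, Finset.card_sdiff_of_subset (hmono (Nat.le_succ i))]
      have := hcard i
      simp only [Nat.succ_eq_add_one]
      omega
    refine ⟨b, ?_, ?_⟩
    · rw [Finset.mem_sdiff] at hb ⊢
      exact ⟨hmono (show i + 1 ≤ k from hi) hb.1, fun h => hb.2 (hmono (Nat.zero_le i) h)⟩
    · rw [hlow i b hb u (hFW i (hUF hu)), hlow i b hb w (hFW i hw), hvi]
      exact hPsep (u, w) (Ne.symm hwu)

end Graph

section LocallyFinite

variable {X : Type*}

lemma SimpleGraph.Connected.exists_adj_dist_lt {H : SimpleGraph X} (hH : H.Connected) {x y : X}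
    (hne : x ≠ y) : ∃ z, H.Adj x z ∧ H.dist z y < H.dist x y := by
  obtain ⟨w, hw⟩ := hH.exists_walk_length_eq_dist x y
  cases w with
  | nil => exact absurd rfl hne
  | cons h q =>
    refine ⟨_, h, ?_⟩
    have := H.dist_le q
    rw [← hw, SimpleGraph.Walk.length_cons]
    omega

lemma SimpleGraph.Connected.finite_setOf_dist_le {H : SimpleGraph X} (hH : H.Connected)
    (hfin : ∀ x, (H.neighborSet x).Finite) (x : X) (n : ℕ) : {y | H.dist y x ≤ n}.Finite := by
  induction n with
  | zero =>
    refine (Set.finite_singleton x).subset fun y hy => ?_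
    simpa [hH.dist_eq_zero_iff] using hy
  | succ n ih =>
    refine ((ih.biUnion fun z _ => hfin z).union (Set.finite_singleton x)).subset fun y hy => ?_
    by_cases hyx : y = x
    · exact Or.inr hyx
    obtain ⟨z, hyz, hz⟩ := hH.exists_adj_dist_lt hyx
    refine Or.inl (Set.mem_biUnion (x := z) ?_ hyz.symm)
    simp only [Set.mem_ofPred_eq] at hy ⊢
    omega

lemma SimpleGraph.Connected.dist_map_le {H : SimpleGraph X} (hH : H.Connected) {f : X → X}
    (hf : ∀ x y, H.Adj x y → H.Adj (f x) (f y)) (x y : X) : H.dist (f x) (f y) ≤ H.dist x y := by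
  obtain ⟨w, hw⟩ := hH.exists_walk_length_eq_dist x y
  rw [← hw, ← SimpleGraph.Walk.length_map (⟨f, fun {a b} => hf a b⟩ : H →g H) w]
  exact H.dist_le _

/-- Local rigidity when the group preserves a nonempty locally finite graph. -/
lemma exists_rigid_of_locallyFinite [Infinite X] [DecidableEq X] {G : Subgroup (Equiv.Perm X)}
    (hprim : ∀ r : Setoid X, (∀ g ∈ G, ∀ x y : X, r.r x y → r.r (g x) (g y)) →
      (∀ x y : X, r.r x y → x = y) ∨ (∀ x y : X, r.r x y))
    {H : SimpleGraph X} (hG : ∀ g ∈ G, ∀ x y, H.Adj x y → H.Adj (g x) (g y))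
    (hfin : ∀ x, (H.neighborSet x).Finite) {a b : X} (hab : H.Adj a b) (U : Finset X) :
    ∃ V : Finset X, U ⊆ V ∧ ∀ g ∈ G, V.image g = V → ∀ x ∈ U, g x = x := by
  have hconn : H.Connected := by
    have : Nonempty X := ⟨a⟩
    refine ⟨?_⟩
    have hreach : ∀ g ∈ G, ∀ x y, H.Reachable x y → H.Reachable (g x) (g y) := by
      rintro g hg x y ⟨w⟩
      exact ⟨w.map (⟨g, fun {a b} => hG g hg a b⟩ : H →g H)⟩
    rcases hprim H.reachableSetoid hreach with h | h
    · exact absurd (h a b hab.reachable) hab.ne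
    · exact h
  have hdist : ∀ g ∈ G, ∀ x y, H.dist (g x) (g y) = H.dist x y := by
    intro g hg x y
    refine le_antisymm (hconn.dist_map_le (hG g hg) x y) ?_
    simpa using hconn.dist_map_le (hG g⁻¹ (G.inv_mem hg)) (g x) (g y)
  have hinf : ∀ x y, x ≠ y → {q | H.dist x q ≠ H.dist y q}.Infinite := by
    let r : Setoid X :=
      { r := fun x y => {q | H.dist x q ≠ H.dist y q}.Finite
        iseqv :=
          { refl := fun x => by simp
            symm := fun {x y} h => by simpa only [ne_comm] using h
            trans := fun {x y z} h₁ h₂ => (h₁.union h₂).subset fun q hq => by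
              by_contra hc
              simp only [Set.mem_union, Set.mem_ofPred_eq, not_or, not_not] at hc
              exact hq (hc.1.trans hc.2) } }
    have hrG : ∀ g ∈ G, ∀ x y, r.r x y → r.r (g x) (g y) := by
      intro g hg x y hxy
      refine (hxy.image g).subset fun q hq => ?_
      obtain ⟨w, rfl⟩ := g.surjective q
      exact ⟨w, by simpa only [Set.mem_ofPred_eq, hdist g hg] using hq, rfl⟩
    rcases hprim r hrG with h | h
    · exact fun x y hne hf => hne (h x y hf)
    · exfalso
      obtain ⟨q, hq⟩ := (((hfin a).biUnion fun y _ => h a y).union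
        (Set.finite_singleton a)).exists_notMem
      rw [Set.mem_union, not_or] at hq
      obtain ⟨z, haz, hz⟩ := hconn.exists_adj_dist_lt (Ne.symm hq.2)
      exact hq.1 (Set.mem_biUnion (x := z) haz hz.ne')
  wlog hU : 1 < U.card generalizing U
  · obtain ⟨U', hUU', hcard⟩ := Infinite.exists_superset_card_eq U 2 (by omega)
    obtain ⟨V, hV, h⟩ := this U' (by omega)
    exact ⟨V, hUU'.trans hV, fun g hg hgV x hx => h g hg hgV x (hUU' hx)⟩
  have key : ∀ S : Finset (X × X), S ⊆ U.offDiag → ∃ V : Finset X, U ⊆ V ∧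
      ∀ g ∈ G, V.image g = V → U.image g = U ∧
        ∀ q ∈ S, ∃ p, g p = p ∧ H.dist q.1 p ≠ H.dist q.2 p := by
    intro S
    induction S using Finset.induction_on with
    | empty => exact fun _ => ⟨U, subset_rfl, fun g _ h => ⟨h, by simp⟩⟩
    | insert q S _ ih =>
      intro hS
      obtain ⟨V, hUV, hV⟩ := ih ((Finset.subset_insert _ _).trans hS)
      have hq := (Finset.mem_offDiag.1 (hS (Finset.mem_insert_self _ _))).2.2
      obtain ⟨N, hN⟩ : ∃ N, ∀ y ∈ V, ∀ z ∈ V, H.dist y z ≤ N :=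
        ⟨(V ×ˢ V).sup fun w => H.dist w.1 w.2, fun y hy z hz =>
          Finset.le_sup (f := fun w : X × X => H.dist w.1 w.2) (Finset.mk_mem_product hy hz)⟩
      obtain ⟨p, hpq, hp⟩ := ((hinf _ _ hq).sdiff
        (V.finite_toSet.biUnion fun x _ => hconn.finite_setOf_dist_le hfin x N)).nonempty
      have hfar : ∀ x ∈ V, N < H.dist p x := by
        intro x hx
        by_contra hc
        exact hp (Set.mem_biUnion (x := x) hx (not_lt.1 hc))
      have hpV : p ∉ V := fun h => by simpa using hfar p h
      refine ⟨insert p V, hUV.trans (Finset.subset_insert _ _), fun g hg hgV => ?_⟩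
      have hmem : ∀ z, g z ∈ insert p V ↔ z ∈ insert p V := fun z => by
        conv_lhs => rw [← hgV]
        simp
      have hgp : g p = p := by
        by_contra hgp
        obtain ⟨y, hy⟩ := g.surjective p
        have hyV : y ∈ V := by
          have := (hmem y).1 (hy ▸ Finset.mem_insert_self _ _)
          exact (Finset.mem_insert.1 this).resolve_left fun e => hgp (e ▸ hy)
        obtain ⟨z, hz, hzy⟩ := Finset.exists_mem_ne (hU.trans_le (Finset.card_le_card hUV)) y
        have hgz : g z ∈ V := (Finset.mem_insert.1 ((hmem z).2 (Finset.mem_insert_of_mem hz))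
          ).resolve_left fun e => hzy (g.injective (e.trans hy.symm))
        have h₁ := hfar _ hgz
        rw [← hy, hdist g hg] at h₁
        exact absurd (hN y hyV z hz) (not_le.2 h₁)
      have hgV' : V.image g = V := by
        rw [Finset.image_insert, hgp] at hgV
        have hp' : p ∉ V.image g := fun h => by
          obtain ⟨z, hz, hzp⟩ := Finset.mem_image.1 h
          exact hpV (g.injective (hzp.trans hgp.symm) ▸ hz)
        rw [← Finset.erase_insert hp', hgV, Finset.erase_insert hpV]
      obtain ⟨h₁, h₂⟩ := hV g hg hgV'
      refine ⟨h₁, fun q' hq' => ?_⟩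
      rcases Finset.mem_insert.1 hq' with rfl | hq'
      · exact ⟨p, hgp, hpq⟩
      · exact h₂ q' hq'
  obtain ⟨V, hUV, hV⟩ := key U.offDiag subset_rfl
  refine ⟨V, hUV, fun g hg hgV x hx => ?_⟩
  obtain ⟨h₁, h₂⟩ := hV g hg hgV
  by_contra hne
  have hgx : g x ∈ U := h₁ ▸ Finset.mem_image_of_mem g hx
  obtain ⟨p, hp, hpx⟩ := h₂ (g x, x) (Finset.mem_offDiag.2 ⟨hgx, hx, hne⟩)
  apply hpx
  conv_lhs => rw [← hp]
  exact hdist g hg x p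

/-- If any two rows of a relation differ only finitely, its automorphisms preserve a nonempty
locally finite graph. -/
lemma exists_locallyFinite_of_finite_diff {R : X → X → Prop} (hsymm : ∀ x y, R x y → R y x)
    (hfin : ∀ x y, {z | ¬ (R z x ↔ R z y)}.Finite) {a b c d : X} (hab : a ≠ b) (hRab : R a b)
    (hcd : c ≠ d) (hRcd : ¬ R c d) :
    ∃ H : SimpleGraph X, (∀ g : Equiv.Perm X, (∀ x y, R (g x) (g y) ↔ R x y) →
      ∀ x y, H.Adj x y → H.Adj (g x) (g y)) ∧ (∀ x, (H.neighborSet x).Finite) ∧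
      ∃ x y, H.Adj x y := by
  have hcomm : ∀ x y, R x y ↔ R y x := fun x y => ⟨hsymm x y, hsymm y x⟩
  by_cases hA : {z | R z a}.Finite
  · refine ⟨SimpleGraph.fromRel R, ?_, fun x => (hA.union (hfin x a)).subset ?_, a, b, ?_⟩
    · intro g hg x y h
      simpa [hg] using h
    · intro z hz
      have hzx : R z x := by
        have := (SimpleGraph.fromRel_adj _ _ _).1 hz
        exact this.2.elim (hsymm _ _) id
      by_cases hza : R z a
      · exact Or.inl hza
      · exact Or.inr fun h => hza (h.1 hzx)
    · exact (SimpleGraph.fromRel_adj _ _ _).2 ⟨hab, Or.inl hRab⟩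
  by_cases hA' : {z | ¬ R z a}.Finite
  · refine ⟨SimpleGraph.fromRel fun x y => ¬ R x y, ?_, fun x =>
      (hA'.union (hfin x a)).subset ?_, c, d, ?_⟩
    · intro g hg x y h
      simpa [hg] using h
    · intro z hz
      have hzx : ¬ R z x := by
        have := (SimpleGraph.fromRel_adj (fun x y => ¬ R x y) _ _).1 hz
        exact this.2.elim (fun h h' => h (hsymm _ _ h')) id
      by_cases hza : R z a
      · exact Or.inr fun h => hzx (h.2 hza)
      · exact Or.inl hza
    · exact (SimpleGraph.fromRel_adj _ _ _).2 ⟨hcd, Or.inl hRcd⟩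
  let δ : X → X → ℕ := fun x y => {z | ¬ (R z x ↔ R z y)}.ncard
  have hδ : ∀ x y, δ x y = δ y x := fun x y => by simp only [δ, iff_comm]
  refine ⟨SimpleGraph.fromRel fun x y => δ x y ≤ δ a b, ?_, fun x => ?_, a, b, ?_⟩
  · intro g hg x y h
    have hδg : ∀ x y, δ (g x) (g y) = δ x y := fun x y => by
      have himg : {z | ¬ (R z (g x) ↔ R z (g y))} =
          Set.image g {z | ¬ (R z x ↔ R z y)} := by
        ext z
        obtain ⟨w, rfl⟩ := g.surjective z
        simp [hg]
      simp only [δ, himg, Set.ncard_image_of_injective _ g.injective]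
    simpa [hδg] using h
  · have hrow : ∀ P : Prop, {z | R z x ↔ P}.Infinite := by
      intro P hP
      have hP' : {z | R z a ↔ P}.Finite := (hP.union (hfin x a)).subset fun z hz => by
        by_cases h : R z x ↔ R z a
        · exact Or.inl (h.trans hz)
        · exact Or.inr h
      by_cases h : P
      · exact hA (by simpa [h] using hP')
      · exact hA' (by simpa [h] using hP')
    by_contra hinf
    have hne := cofinite_inf_principal_neBot_iff.2 hinf
    obtain ⟨p, hp⟩ := Ultrafilter.exists_le (cofinite ⊓ 𝓟 ((SimpleGraph.fromRel
      fun x y => δ x y ≤ δ a b).neighborSet x))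
    have hp₁ : ∀ᶠ y in (p : Filter X), δ x y ≤ δ a b := by
      filter_upwards [(hp.trans inf_le_right) (mem_principal_self _)] with y hy
      exact ((SimpleGraph.fromRel_adj (fun x y => δ x y ≤ δ a b) _ _).1 hy).2.elim id fun h =>
        (hδ x y).trans_le h
    have hconst : ∀ z, (∀ᶠ y in (p : Filter X), R y z) ↔ ∀ᶠ y in (p : Filter X), R y a := by
      intro z
      have : ∀ᶠ y in (p : Filter X), (R y z ↔ R y a) := by
        filter_upwards [(hp.trans inf_le_left) (hfin z a).compl_mem_cofinite] with y hy
        simpa using hy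
      exact eventually_congr this
    obtain ⟨T, hT, hTcard⟩ :=
      (hrow (¬ ∀ᶠ y in (p : Filter X), R y a)).exists_subset_card_eq (δ a b + 1)
    have hp₂ : ∀ᶠ y in (p : Filter X), ∀ z ∈ T, (R y z ↔ ∀ᶠ y in (p : Filter X), R y a) :=
      (Finset.eventually_all _).2 fun z _ => by
        simpa only [hconst z] using p.eventually_iff_eventually fun y => R y z
    obtain ⟨y, hy₁, hy₂⟩ := (hp₁.and hp₂).exists
    have hsub : (T : Set X) ⊆ {z | ¬ (R z x ↔ R z y)} := by
      intro z hz h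
      have h₁ : R z x ↔ _ := hT hz
      have h₂ := hy₂ z hz
      rw [hcomm y z] at h₂
      tauto
    have := Set.ncard_le_ncard hsub (hfin x y)
    rw [Set.ncard_coe_finset, hTcard] at this
    simp only [δ] at this hy₁
    omega
  · exact (SimpleGraph.fromRel_adj _ _ _).2 ⟨hab, Or.inl le_rfl⟩

end LocallyFinite

/-- An invariant symmetric relation of a primitive group separates points unless it is constant. -/
lemma eq_of_forall_iff_of_primitive {X : Type*} {G : Subgroup (Equiv.Perm X)}
    (hprim : ∀ r : Setoid X, (∀ g ∈ G, ∀ x y : X, r.r x y → r.r (g x) (g y)) →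
      (∀ x y : X, r.r x y → x = y) ∨ (∀ x y : X, r.r x y))
    {R : X → X → Prop} (hsymm : ∀ x y, R x y → R y x)
    (hinv : ∀ g ∈ G, ∀ x y, R (g x) (g y) ↔ R x y) {a b c d : X} (hab : R a b) (hcd : ¬ R c d)
    (x y : X) (hxy : ∀ z, R z x ↔ R z y) : x = y := by
  let r : Setoid X :=
    { r := fun x y => ∀ z, R z x ↔ R z y
      iseqv :=
        { refl := fun x z => Iff.rfl
          symm := fun h z => (h z).symm
          trans := fun h₁ h₂ z => (h₁ z).trans (h₂ z) } }
  have hrG : ∀ g ∈ G, ∀ x y, r.r x y → r.r (g x) (g y) := by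
    intro g hg x y h z
    obtain ⟨w, rfl⟩ := g.surjective z
    rw [hinv g hg, hinv g hg]
    exact h w
  rcases hprim r hrG with h | h
  · exact h x y hxy
  · exact absurd (hsymm _ _ ((h a c d).1 (hsymm _ _ ((h b d a).1 hab)))) hcd

/-- a primitive but not 2-homogeneous permutation group on an infinite set
    acts locally rigidly. -/
theorem stmt12 {X : Type*} [Infinite X] [DecidableEq X] (G : Subgroup (Equiv.Perm X))
    (htrans : ∀ x y : X, ∃ g ∈ G, g x = y)
    (hprim : ∀ r : Setoid X, (∀ g ∈ G, ∀ x y : X, r.r x y → r.r (g x) (g y)) →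
      (∀ x y : X, r.r x y → x = y) ∨ (∀ x y : X, r.r x y))
    (hnot2hom : ¬ ∀ s t : Finset X, s.card = 2 → t.card = 2 → ∃ g ∈ G, s.image g = t) :
    ∀ U : Finset X, ∃ V : Finset X, U ⊆ V ∧
      ∀ g ∈ G, V.image g = V → ∀ x ∈ U, g x = x := by
  intro U
  obtain ⟨a, b, c, d, hab, hcd, hno⟩ : ∃ a b c d : X, a ≠ b ∧ c ≠ d ∧
      ∀ g ∈ G, ({g a, g b} : Finset X) ≠ {c, d} := by
    push Not at hnot2hom
    obtain ⟨s, t, hs, ht, h⟩ := hnot2hom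
    obtain ⟨a, b, hab, rfl⟩ := Finset.card_eq_two.1 hs
    obtain ⟨c, d, hcd, rfl⟩ := Finset.card_eq_two.1 ht
    exact ⟨a, b, c, d, hab, hcd, fun g hg => by simpa using h g hg⟩
  let R : X → X → Prop := fun x y => ∃ g ∈ G, (g a = x ∧ g b = y) ∨ (g a = y ∧ g b = x)
  have hsymm : ∀ x y, R x y → R y x := fun x y ⟨g, hg, h⟩ => ⟨g, hg, h.symm⟩
  have hmap : ∀ g ∈ G, ∀ x y, R x y → R (g x) (g y) := by
    rintro g hg x y ⟨h, hh, ⟨rfl, rfl⟩ | ⟨rfl, rfl⟩⟩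
    · exact ⟨g * h, G.mul_mem hg hh, Or.inl ⟨rfl, rfl⟩⟩
    · exact ⟨g * h, G.mul_mem hg hh, Or.inr ⟨rfl, rfl⟩⟩
  have hinv : ∀ g ∈ G, ∀ x y, R (g x) (g y) ↔ R x y := fun g hg x y =>
    ⟨fun h => by simpa using hmap g⁻¹ (G.inv_mem hg) _ _ h, hmap g hg x y⟩
  have hRab : R a b := ⟨1, G.one_mem, Or.inl ⟨rfl, rfl⟩⟩
  have hRcd : ¬ R c d := by
    rintro ⟨g, hg, ⟨rfl, rfl⟩ | ⟨rfl, rfl⟩⟩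
    · exact hno g hg rfl
    · exact hno g hg (Finset.pair_comm _ _)
  clear_value R
  let r : Setoid X :=
    { r := fun x y => {z | ¬ (R z x ↔ R z y)}.Finite
      iseqv :=
        { refl := fun x => by simp
          symm := fun {x y} h => by simpa only [iff_comm] using h
          trans := fun {x y z} h₁ h₂ => (h₁.union h₂).subset fun q hq => by
            by_contra hc
            simp only [Set.mem_union, Set.mem_ofPred_eq, not_or, not_not] at hc
            exact hq (hc.1.trans hc.2) } }
  have hrG : ∀ g ∈ G, ∀ x y, r.r x y → r.r (g x) (g y) := by
    intro g hg x y hxy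
    refine (hxy.image g).subset fun q hq => ?_
    obtain ⟨w, rfl⟩ := g.surjective q
    exact ⟨w, by simpa only [Set.mem_ofPred_eq, hinv g hg] using hq, rfl⟩
  rcases hprim r hrG with hr | hr
  swap
  · obtain ⟨H, hH, hfin, x, y, hxy⟩ :=
      exists_locallyFinite_of_finite_diff hsymm hr hab hRab hcd hRcd
    exact exists_rigid_of_locallyFinite hprim (fun g hg => hH g (hinv g hg)) hfin hxy U
  by_cases hiso : ∀ v, ∃ F : Finset X, ∀ x ∉ F, x ≠ v → ∃ z ∈ F, z ≠ v ∧ ¬ (R z v ↔ R z x)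
  · obtain ⟨V, hUV, hV⟩ :=
      exists_rigid_of_isolated hsymm (fun x y hne hf => hne (hr x y hf)) hiso U
    exact ⟨V, hUV, fun g hg => hV g (hinv g hg)⟩
  push Not at hiso
  obtain ⟨v, hv⟩ := hiso
  choose x hxF hxv hx using hv
  let p : Ultrafilter X := Ultrafilter.of (map x atTop)
  have hp : ∀ Q : X → Prop, (∀ᶠ F in atTop, Q (x F)) → ∀ᶠ t in (p : Filter X), Q t :=
    fun Q hQ => Ultrafilter.of_le (map x atTop) hQ
  have hpne : ∀ w, ∀ᶠ t in (p : Filter X), t ≠ w := fun w => hp _ <| by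
    filter_upwards [eventually_ge_atTop {w}] with F hF e
    exact hxF F (e ▸ hF (Finset.mem_singleton_self _))
  -- Give all diagonal entries the limit value, so that `p` converges to the whole row of `v`.
  let R' : X → X → Prop := fun y z =>
    (y = z ∧ ∀ᶠ t in (p : Filter X), R t v) ∨ (y ≠ z ∧ R y z)
  have hR' : ∀ y z, y ≠ z → (R' y z ↔ R y z) := fun y z h => by simp [R', h]
  have hR'diag : ∀ y, R' y y ↔ ∀ᶠ t in (p : Filter X), R t v := fun y => by simp [R']
  have hsymm' : ∀ y z, R' y z → R' z y := by
    rintro y z (⟨h, h'⟩ | ⟨h, h'⟩)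
    · exact Or.inl ⟨h.symm, h'⟩
    · exact Or.inr ⟨h.symm, hsymm _ _ h'⟩
  have hinv' : ∀ g ∈ G, ∀ y z, R' (g y) (g z) ↔ R' y z := fun g hg y z => by
    simp only [R', hinv g hg, g.injective.eq_iff, ne_eq]
  have hpv : ∀ z, (∀ᶠ t in (p : Filter X), R' t z) ↔ R' v z := by
    intro z
    have h₁ : (∀ᶠ t in (p : Filter X), R' t z) ↔ ∀ᶠ t in (p : Filter X), R t z := by
      apply eventually_congr
      filter_upwards [hpne z] with t ht using hR' t z ht
    rw [h₁]
    by_cases hzv : z = v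
    · rw [hzv, hR'diag]
    rw [hR' v z (Ne.symm hzv)]
    have h₂ : ∀ᶠ t in (p : Filter X), (R t z ↔ R v z) := hp _ <| by
      filter_upwards [eventually_ge_atTop {z}] with F hF
      have := hx F z (hF (Finset.mem_singleton_self _)) hzv
      exact ⟨fun h => hsymm _ _ (this.2 (hsymm _ _ h)), fun h => hsymm _ _ (this.1 (hsymm _ _ h))⟩
    rw [eventually_congr h₂, eventually_const]
  choose γ hγG hγ using htrans v
  have hcof : ∀ w, (p.map (γ w) : Filter X) ≤ cofinite := by
    intro w
    rw [le_cofinite_iff_eventually_ne]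
    intro y
    rw [Ultrafilter.coe_map, eventually_map]
    filter_upwards [hpne ((γ w)⁻¹ y)] with t ht e
    exact ht (by simp [← e])
  have hlim : ∀ w z, (∀ᶠ t in (p.map (γ w) : Filter X), R' t z) ↔ R' w z := by
    intro w z
    obtain ⟨y, rfl⟩ := (γ w).surjective z
    rw [Ultrafilter.coe_map, eventually_map]
    simp only [hinv' _ (hγG w), hpv]
    rw [← hinv' _ (hγG w), hγ]
  have hsep := eq_of_forall_iff_of_primitive hprim hsymm' hinv' ((hR' a b hab).2 hRab)
    fun h => hRcd ((hR' c d hcd).1 h)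
  obtain ⟨V, hUV, hV⟩ := exists_rigid_of_limits hsymm'
    (fun y z h => (hR'diag z).2 ((hR'diag y).1 h)) hsep (fun w => p.map (γ w)) hcof hlim U
  exact ⟨V, hUV, fun g hg => hV g (hinv' g hg)⟩
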